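/- Let (X, f_{1,∞}) be an NDS with f_{1,∞} feeble open and converging uniformly to a continuous map f : X → X, and suppose the compositions (f_r^k) converge collectively to the iterates (f^k). Then f_{1,∞} is thickly syndetically transitive if and only if f is thickly syndetically transitive (i.e., for all nonempty open U, V ⊆ X the set {n ∈ ℕ : f^n(U) ∩ V ≠ ∅} is thickly syndetic). -/

import Mathlib

open Set Filter

section NDSDefs

variable {X : Type*}

/-- `nComp f i n` is the composition `f (i+n-1) ∘ ⋯ ∘ f (i+1) ∘ f i`.
Here `f` is the 0-indexed sequence of maps of the NDS (so `f 0` is the paper's `f₁`),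
and `nComp f 0 n` is the paper's `f₁ⁿ`. -/
def nComp (f : ℕ → X → X) (i : ℕ) : ℕ → X → X
  | 0 => id
  | n + 1 => f (i + n) ∘ nComp f i n

/-- The `k`-th iterate NDS `f^{[k]}`: its `n`-th map (0-indexed) is `f_{kn+1}^{k}`
in the paper's notation, i.e. the composition of `k` maps of `f` starting at index `k*n`. -/
def iterNDS (f : ℕ → X → X) (k : ℕ) : ℕ → X → X :=
  fun n => nComp f (k * n) k

/-- The product NDS `f^{[a]} = f^{[a 0]} × ⋯ × f^{[a (r-1)]}` on `Fin r → X`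
for a vector `a : Fin r → ℕ`. -/
def vecIter (f : ℕ → X → X) {r : ℕ} (a : Fin r → ℕ) : ℕ → (Fin r → X) → Fin r → X :=
  fun n x i => iterNDS f (a i) n (x i)

section Topo

variable [TopologicalSpace X]

/-- Topological transitivity of an NDS. -/
def NDSTransitive (f : ℕ → X → X) : Prop :=
  ∀ U V : Set X, IsOpen U → U.Nonempty → IsOpen V → V.Nonempty →
    ∃ n : ℕ, 1 ≤ n ∧ (nComp f 0 n '' U ∩ V).Nonempty

/-- Multi-transitivity of an NDS. -/
def MultiTransitive (f : ℕ → X → X) : Prop :=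
  ∀ m : ℕ, 1 ≤ m → ∀ U V : Fin m → Set X,
    (∀ i, IsOpen (U i)) → (∀ i, (U i).Nonempty) →
    (∀ i, IsOpen (V i)) → (∀ i, (V i).Nonempty) →
    ∃ l : ℕ, 1 ≤ l ∧ ∀ i : Fin m, (nComp f 0 ((i.1 + 1) * l) '' U i ∩ V i).Nonempty

/-- Multi-transitivity of an NDS with respect to a vector `a`. -/
def MultiTransWrt (f : ℕ → X → X) {p : ℕ} (a : Fin p → ℕ) : Prop :=
  ∀ U V : Fin p → Set X,
    (∀ i, IsOpen (U i)) → (∀ i, (U i).Nonempty) →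
    (∀ i, IsOpen (V i)) → (∀ i, (V i).Nonempty) →
    ∃ l : ℕ, 1 ≤ l ∧ ∀ i : Fin p, (nComp f 0 (a i * l) '' U i ∩ V i).Nonempty

/-- Strong multi-transitivity of an NDS: multi-transitivity with respect to every
vector of positive integers. -/
def StronglyMultiTransitive (f : ℕ → X → X) : Prop :=
  ∀ p : ℕ, 1 ≤ p → ∀ a : Fin p → ℕ, (∀ i, 1 ≤ a i) → MultiTransWrt f a

/-- Weak mixing of order `n` of an NDS. -/
def WeaklyMixingOfOrder (f : ℕ → X → X) (n : ℕ) : Prop :=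
  ∀ U V : Fin n → Set X,
    (∀ i, IsOpen (U i)) → (∀ i, (U i).Nonempty) →
    (∀ i, IsOpen (V i)) → (∀ i, (V i).Nonempty) →
    ∃ m : ℕ, 1 ≤ m ∧ ∀ i : Fin n, (nComp f 0 m '' U i ∩ V i).Nonempty

/-- Weak mixing of all orders of an NDS. -/
def WeaklyMixingAllOrders (f : ℕ → X → X) : Prop :=
  ∀ n : ℕ, 2 ≤ n → WeaklyMixingOfOrder f n

/-- Mild mixing of an NDS: the product with any transitive NDS (on a compact
metric space, with continuous maps) is transitive. -/
def MildlyMixing (f : ℕ → X → X) : Prop :=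
  ∀ (Y : Type) [MetricSpace Y] [CompactSpace Y] (g : ℕ → Y → Y),
    (∀ n, Continuous (g n)) → NDSTransitive g →
      NDSTransitive (fun n (p : X × Y) => (f n p.1, g n p.2))

/-- Δ-transitivity of an NDS. -/
def DeltaTransitive (f : ℕ → X → X) : Prop :=
  ∀ m : ℕ, 1 ≤ m → ∃ Y : Set X, Dense Y ∧ IsGδ Y ∧
    ∀ x ∈ Y, Dense {y : Fin m → X | ∃ n : ℕ, 1 ≤ n ∧ y = fun i => nComp f 0 ((i.1 + 1) * n) x}

/-- Δ-mixing of an NDS. -/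
def DeltaMixing (f : ℕ → X → X) : Prop :=
  ∀ m : ℕ, 1 ≤ m → ∀ A : Set ℕ, A.Infinite → 0 ∉ A →
    ∃ Y : Set X, Dense Y ∧ IsGδ Y ∧
      ∀ x ∈ Y, Dense {y : Fin m → X | ∃ n ∈ A, y = fun i => nComp f 0 ((i.1 + 1) * n) x}

/-- The set `N_{f_{1,∞}}(U,V)` of (positive) hitting times. -/
def hitTimes (f : ℕ → X → X) (U V : Set X) : Set ℕ :=
  {n : ℕ | 1 ≤ n ∧ (nComp f 0 n '' U ∩ V).Nonempty}

/-- A set of positive integers is syndetic if it has bounded gaps. -/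
def Syndetic (A : Set ℕ) : Prop :=
  ∃ M : ℕ, ∀ i : ℕ, 1 ≤ i → ∃ j ∈ A, i ≤ j ∧ j ≤ i + M

/-- A set of positive integers is thick if it contains arbitrarily long runs. -/
def ThickSet (A : Set ℕ) : Prop :=
  ∀ p : ℕ, ∃ n : ℕ, 1 ≤ n ∧ ∀ j ≤ p, n + j ∈ A

/-- A set of positive integers is thickly syndetic. -/
def ThicklySyndetic (A : Set ℕ) : Prop :=
  ∀ l : ℕ, Syndetic {m : ℕ | ∀ j ≤ l, m + j ∈ A}

/-- Thick transitivity of an NDS. -/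
def ThicklyTransitive (f : ℕ → X → X) : Prop :=
  ∀ U V : Set X, IsOpen U → U.Nonempty → IsOpen V → V.Nonempty →
    ThickSet (hitTimes f U V)

/-- Thickly syndetic transitivity of an NDS. -/
def ThicklySyndeticallyTransitive (f : ℕ → X → X) : Prop :=
  ∀ U V : Set X, IsOpen U → U.Nonempty → IsOpen V → V.Nonempty →
    ThicklySyndetic (hitTimes f U V)

/-- Total transitivity of an NDS: every iterate `f^{[n]}` is transitive. -/
def TotallyTransitive (f : ℕ → X → X) : Prop :=
  ∀ n : ℕ, 1 ≤ n → NDSTransitive (iterNDS f n)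

/-- An NDS is feeble open if each map sends nonempty open sets to sets with
nonempty interior. -/
def FeebleOpen (f : ℕ → X → X) : Prop :=
  ∀ i : ℕ, ∀ U : Set X, IsOpen U → U.Nonempty → (interior (f i '' U)).Nonempty

/-- Strong multi-transitivity of an autonomous system `(X, g)`. -/
def ADSStronglyMultiTransitive (g : X → X) : Prop :=
  ∀ m : ℕ, 1 ≤ m → ∀ a : Fin m → ℕ, (∀ j, 1 ≤ a j) →
    ∀ U V : Fin m → Set X,
      (∀ j, IsOpen (U j)) → (∀ j, (U j).Nonempty) →
      (∀ j, IsOpen (V j)) → (∀ j, (V j).Nonempty) →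
      ∃ l : ℕ, 1 ≤ l ∧ ∀ j : Fin m, (g^[a j * l] '' U j ∩ V j).Nonempty

/-- Δ-transitivity of an autonomous system `(X, g)`. -/
def ADSDeltaTransitive (g : X → X) : Prop :=
  ∀ m : ℕ, 1 ≤ m → ∃ Y : Set X, Dense Y ∧ IsGδ Y ∧
    ∀ x ∈ Y, Dense {y : Fin m → X | ∃ n : ℕ, 1 ≤ n ∧ y = fun i => g^[(i.1 + 1) * n] x}

/-- Thickly syndetic transitivity of an autonomous system `(X, g)`. -/
def ADSThicklySyndeticallyTransitive (g : X → X) : Prop :=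
  ∀ U V : Set X, IsOpen U → U.Nonempty → IsOpen V → V.Nonempty →
    ThicklySyndetic {n : ℕ | 1 ≤ n ∧ (g^[n] '' U ∩ V).Nonempty}

end Topo

section MetricDefs

variable [MetricSpace X]

/-- The compositions `f_r^k` converge collectively to the iterates `g^k`. -/
def CollectiveConvergence (f : ℕ → X → X) (g : X → X) : Prop :=
  ∀ ε : ℝ, 0 < ε → ∃ r₀ : ℕ, ∀ r ≥ r₀, ∀ k : ℕ, 1 ≤ k → ∀ x : X,
    dist (nComp f r k x) (g^[k] x) < ε

/-- Chain mixing of an NDS. -/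
def NDSChainMixing (f : ℕ → X → X) : Prop :=
  ∀ x y : X, ∀ δ : ℝ, 0 < δ → ∃ N : ℕ, 1 ≤ N ∧ ∀ n ≥ N,
    ∃ c : ℕ → X, c 0 = x ∧ c n = y ∧ ∀ i < n, dist (f i (c i)) (c (i + 1)) < δ

/-- Chain transitivity of an NDS. -/
def NDSChainTransitive (f : ℕ → X → X) : Prop :=
  ∀ x y : X, ∀ δ : ℝ, 0 < δ → ∃ n : ℕ, 1 ≤ n ∧
    ∃ c : ℕ → X, c 0 = x ∧ c n = y ∧ ∀ i < n, dist (f i (c i)) (c (i + 1)) < δ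

/-- The shadowing property of an NDS. -/
def NDSShadowing (f : ℕ → X → X) : Prop :=
  ∀ ε : ℝ, 0 < ε → ∃ δ : ℝ, 0 < δ ∧ ∀ n : ℕ, ∀ c : ℕ → X,
    (∀ i < n, dist (f i (c i)) (c (i + 1)) < δ) →
      ∃ z : X, ∀ i ≤ n, dist (nComp f 0 i z) (c i) < ε

end MetricDefs

end NDSDefs

/-! Fix a nonempty open `U` and a time `r`. Up to translation by `r`, the hitting times of `V` from
`U` are the hitting times of `V` from `f_1^r(U)` under the tail of the sequence starting at `r`, and
thick syndeticity is translation invariant. Collective convergence makes all compositions along a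
late tail uniformly close to the iterates of the limit, so every hitting time of `V` for one of
these two systems is a hitting time of a small thickening of `V` for the other. It remains to
exchange `f_1^r(U)` for an open set: feeble openness puts a nonempty open set inside it, and
conversely transitivity provides arbitrarily late `r` for which the preimage of `U` under `f_1^r`
is nonempty. -/

section Syndetic

variable {A B : Set ℕ}

theorem Syndetic.mono_of_pos (hA : Syndetic A) (hAB : ∀ n, 1 ≤ n → n ∈ A → n ∈ B) :
    Syndetic B := by
  obtain ⟨M, hM⟩ := hA
  refine ⟨M, fun i hi ↦ ?_⟩
  obtain ⟨j, hjA, hij, hjM⟩ := hM i hi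
  exact ⟨j, hAB j (hi.trans hij) hjA, hij, hjM⟩

theorem ThicklySyndetic.mono_of_pos (hA : ThicklySyndetic A)
    (hAB : ∀ n, 1 ≤ n → n ∈ A → n ∈ B) : ThicklySyndetic B :=
  fun l ↦ (hA l).mono_of_pos fun m hm hrun j hj ↦
    hAB (m + j) (hm.trans (Nat.le_add_right m j)) (hrun j hj)

theorem ThicklySyndetic.mono (hA : ThicklySyndetic A) (hAB : A ⊆ B) : ThicklySyndetic B :=
  hA.mono_of_pos fun _ _ hn ↦ hAB hn

theorem Syndetic.frequently_atTop (hA : Syndetic A) : ∃ᶠ n in atTop, n ∈ A := by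
  obtain ⟨M, hM⟩ := hA
  refine Filter.frequently_atTop.2 fun N ↦ ?_
  obtain ⟨j, hjA, hNj, -⟩ := hM (N + 1) (Nat.le_add_left 1 N)
  exact ⟨j, (Nat.le_succ N).trans hNj, hjA⟩

theorem ThicklySyndetic.frequently_atTop (hA : ThicklySyndetic A) : ∃ᶠ n in atTop, n ∈ A :=
  (hA 0).frequently_atTop.mono fun _ hrun ↦ hrun 0 le_rfl

theorem syndetic_preimage_add_left_iff (r : ℕ) : Syndetic ((r + ·) ⁻¹' A) ↔ Syndetic A := by
  constructor
  · rintro ⟨M, hM⟩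
    refine ⟨r + M, fun i hi ↦ ?_⟩
    obtain ⟨j, hjA, hij, hjM⟩ := hM i hi
    exact ⟨r + j, hjA, by omega, by omega⟩
  · rintro ⟨M, hM⟩
    refine ⟨M, fun i hi ↦ ?_⟩
    obtain ⟨j, hjA, hij, hjM⟩ := hM (r + i) (by omega)
    obtain ⟨k, rfl⟩ : ∃ k, j = r + k := Nat.exists_eq_add_of_le (by omega)
    exact ⟨k, hjA, by omega, by omega⟩

theorem thicklySyndetic_preimage_add_left_iff (r : ℕ) :
    ThicklySyndetic ((r + ·) ⁻¹' A) ↔ ThicklySyndetic A := by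
  refine forall_congr' fun l ↦ ?_
  rw [← syndetic_preimage_add_left_iff (A := {m | ∀ j ≤ l, m + j ∈ A}) r]
  simp only [preimage_ofPred_eq, mem_preimage, add_assoc]

end Syndetic

section Composition

variable {X : Type*}

/-- The tail of an NDS starting at time `r`, again as a sequence indexed from `0`; it lets
compositions starting at `r` be treated as compositions of an NDS starting at `0`. -/
def tailNDS (f : ℕ → X → X) (r : ℕ) : ℕ → X → X :=
  fun n ↦ f (r + n)

theorem nComp_tailNDS (f : ℕ → X → X) (r i n : ℕ) :
    nComp (tailNDS f r) i n = nComp f (r + i) n := by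
  induction n with
  | zero => rfl
  | succ n ih => simp only [nComp, tailNDS, ih, add_assoc]

theorem nComp_add (f : ℕ → X → X) (i r n : ℕ) :
    nComp f i (r + n) = nComp f (i + r) n ∘ nComp f i r := by
  induction n with
  | zero => rfl
  | succ n ih => rw [← add_assoc, nComp, nComp, ih, Function.comp_assoc, add_assoc]

theorem nComp_const (g : X → X) (i n : ℕ) : nComp (fun _ ↦ g) i n = g^[n] := by
  induction n with
  | zero => rfl
  | succ n ih => rw [nComp, ih, Function.iterate_succ']

variable [TopologicalSpace X] {f : ℕ → X → X}

theorem continuous_nComp (hf : ∀ n, Continuous (f n)) (i n : ℕ) : Continuous (nComp f i n) := by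
  induction n with
  | zero => exact continuous_id
  | succ n ih => exact (hf (i + n)).comp ih

theorem FeebleOpen.nonempty_interior_nComp_image (hfo : FeebleOpen f) (i n : ℕ) {U : Set X}
    (hU : IsOpen U) (hne : U.Nonempty) : (interior (nComp f i n '' U)).Nonempty := by
  induction n with
  | zero => simpa only [nComp, image_id, hU.interior_eq] using hne
  | succ n ih =>
    rw [nComp, image_comp]
    exact (hfo (i + n) _ isOpen_interior ih).mono (interior_mono (image_mono interior_subset))

end Composition

section HitTimes

variable {X : Type*}

theorem hitTimes_mono (f : ℕ → X → X) {U U' V V' : Set X} (hU : U ⊆ U') (hV : V ⊆ V') :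
    hitTimes f U V ⊆ hitTimes f U' V' :=
  fun _ ⟨hn, hhit⟩ ↦ ⟨hn, hhit.mono (inter_subset_inter (image_mono hU) hV)⟩

theorem add_mem_hitTimes_iff (f : ℕ → X → X) (U V : Set X) (r : ℕ) {n : ℕ} (hn : 1 ≤ n) :
    r + n ∈ hitTimes f U V ↔ n ∈ hitTimes (tailNDS f r) (nComp f 0 r '' U) V := by
  have hrn : 1 ≤ r + n := hn.trans (Nat.le_add_left n r)
  simp only [hitTimes, mem_ofPred_eq, hn, hrn, true_and, nComp_tailNDS, ← image_comp,
    nComp_add, Nat.add_comm r 0]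

theorem thicklySyndetic_hitTimes_tailNDS_iff (f : ℕ → X → X) (U V : Set X) (r : ℕ) :
    ThicklySyndetic (hitTimes (tailNDS f r) (nComp f 0 r '' U) V) ↔
      ThicklySyndetic (hitTimes f U V) := by
  rw [← thicklySyndetic_preimage_add_left_iff (A := hitTimes f U V) r]
  exact ⟨fun h ↦ h.mono_of_pos fun _ hn ↦ (add_mem_hitTimes_iff f U V r hn).2,
    fun h ↦ h.mono_of_pos fun _ hn ↦ (add_mem_hitTimes_iff f U V r hn).1⟩

theorem adsThicklySyndeticallyTransitive_iff_const [TopologicalSpace X] (g : X → X) :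
    ADSThicklySyndeticallyTransitive g ↔ ThicklySyndeticallyTransitive fun _ ↦ g := by
  simp only [ADSThicklySyndeticallyTransitive, ThicklySyndeticallyTransitive, hitTimes,
    nComp_const]

theorem hitTimes_subset_hitTimes_thickening [PseudoMetricSpace X] {f g : ℕ → X → X} {ε : ℝ}
    (hfg : ∀ k, 1 ≤ k → ∀ x, dist (nComp f 0 k x) (nComp g 0 k x) < ε) (U V : Set X) :
    hitTimes f U V ⊆ hitTimes g U (Metric.thickening ε V) := by
  rintro n ⟨hn, _, ⟨x, hxU, rfl⟩, hxV⟩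
  exact ⟨hn, nComp g 0 n x, mem_image_of_mem _ hxU,
    Metric.mem_thickening_iff.2 ⟨nComp f 0 n x, hxV, by simpa only [dist_comm] using hfg n hn x⟩⟩

theorem exists_isOpen_thickening_subset [PseudoMetricSpace X] {V : Set X}
    (hV : IsOpen V) (hne : V.Nonempty) :
    ∃ ε > 0, ∃ W : Set X, IsOpen W ∧ W.Nonempty ∧ Metric.thickening ε W ⊆ V := by
  obtain ⟨v, hv⟩ := hne
  obtain ⟨ε, hε, hball⟩ := Metric.isOpen_iff.1 hV v hv
  refine ⟨ε / 2, half_pos hε, Metric.ball v (ε / 2), Metric.isOpen_ball,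
    Metric.nonempty_ball.2 (half_pos hε), ?_⟩
  calc Metric.thickening (ε / 2) (Metric.ball v (ε / 2))
      ⊆ Metric.ball v (ε / 2 + ε / 2) := Metric.thickening_ball v (ε / 2) (ε / 2)
    _ = Metric.ball v ε := by rw [add_halves]
    _ ⊆ V := hball

end HitTimes

section CollectiveConvergence

variable {X : Type*} [MetricSpace X] {f : ℕ → X → X} {g : X → X}

theorem CollectiveConvergence.eventually_dist_tailNDS_lt (hcoll : CollectiveConvergence f g)
    {ε : ℝ} (hε : 0 < ε) :
    ∀ᶠ r in atTop, ∀ k, 1 ≤ k → ∀ x,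
      dist (nComp (tailNDS f r) 0 k x) (nComp (fun _ ↦ g) 0 k x) < ε := by
  simpa only [nComp_tailNDS, nComp_const, add_zero] using eventually_atTop.2 (hcoll ε hε)

theorem ThicklySyndeticallyTransitive.ads_of_collectiveConvergence
    (h : ThicklySyndeticallyTransitive f) (hf : ∀ n, Continuous (f n))
    (hcoll : CollectiveConvergence f g) : ADSThicklySyndeticallyTransitive g := by
  rw [adsThicklySyndeticallyTransitive_iff_const]
  intro U V hU hUne hV hVne
  obtain ⟨ε, hε, W, hW, hWne, hWV⟩ := exists_isOpen_thickening_subset hV hVne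
  have hvisits : ∃ᶠ r in atTop, r ∈ hitTimes f univ U :=
    (h univ U isOpen_univ (hUne.mono (subset_univ U)) hU hUne).frequently_atTop
  obtain ⟨r, ⟨-, _, ⟨x, -, rfl⟩, hxU⟩, hclose⟩ :=
    (hvisits.and_eventually (hcoll.eventually_dist_tailNDS_lt hε)).exists
  have htail : ThicklySyndetic
      (hitTimes (tailNDS f r) (nComp f 0 r '' (nComp f 0 r ⁻¹' U)) W) :=
    (thicklySyndetic_hitTimes_tailNDS_iff f _ W r).2
      (h _ W (hU.preimage (continuous_nComp hf 0 r)) ⟨x, hxU⟩ hW hWne)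
  exact (htail.mono (hitTimes_subset_hitTimes_thickening hclose _ W)).mono
    (hitTimes_mono _ (image_preimage_subset _ U) hWV)

theorem ADSThicklySyndeticallyTransitive.nds_of_collectiveConvergence
    (h : ADSThicklySyndeticallyTransitive g) (hfo : FeebleOpen f)
    (hcoll : CollectiveConvergence f g) : ThicklySyndeticallyTransitive f := by
  rw [adsThicklySyndeticallyTransitive_iff_const] at h
  intro U V hU hUne hV hVne
  obtain ⟨ε, hε, W, hW, hWne, hWV⟩ := exists_isOpen_thickening_subset hV hVne
  obtain ⟨r, hclose⟩ := (hcoll.eventually_dist_tailNDS_lt hε).exists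
  have hclose' : ∀ k, 1 ≤ k → ∀ x,
      dist (nComp (fun _ ↦ g) 0 k x) (nComp (tailNDS f r) 0 k x) < ε :=
    fun k hk x ↦ by simpa only [dist_comm] using hclose k hk x
  have hlimit : ThicklySyndetic (hitTimes (fun _ ↦ g) (interior (nComp f 0 r '' U)) W) :=
    h _ W isOpen_interior (hfo.nonempty_interior_nComp_image 0 r hU hUne) hW hWne
  rw [← thicklySyndetic_hitTimes_tailNDS_iff f U V r]
  exact (hlimit.mono (hitTimes_subset_hitTimes_thickening hclose' _ W)).mono
    (hitTimes_mono _ interior_subset hWV)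

theorem thicklySyndeticallyTransitive_iff_limit_general (hf : ∀ n, Continuous (f n))
    (hfo : FeebleOpen f) (hcoll : CollectiveConvergence f g) :
    ThicklySyndeticallyTransitive f ↔ ADSThicklySyndeticallyTransitive g :=
  ⟨fun h ↦ h.ads_of_collectiveConvergence hf hcoll,
    fun h ↦ h.nds_of_collectiveConvergence hfo hcoll⟩

end CollectiveConvergence

/-- under feeble openness, uniform convergence and collective convergence,
an NDS is thickly syndetically transitive iff the limit map is. -/
theorem thicklySyndeticallyTransitive_iff_limit {X : Type*} [MetricSpace X] [CompactSpace X]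
    (f : ℕ → X → X) (hf : ∀ n, Continuous (f n))
    (flim : X → X) (hflim : Continuous flim)
    (hfo : FeebleOpen f)
    (hunif : TendstoUniformly f flim Filter.atTop)
    (hcoll : CollectiveConvergence f flim) :
    ThicklySyndeticallyTransitive f ↔ ADSThicklySyndeticallyTransitive flim := by
  exact thicklySyndeticallyTransitive_iff_limit_general hf hfo hcoll
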